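/- Let n ≥ 4, let A be the Cartan matrix of type D_n and ι an admissible sequence adapted to A. Then for each k ∈ [1,n−2], the set of elements of the form S_{l_p}⋯S_{l_1} x_{r,k} (p ≥ 0, r, l_1,…,l_p ≥ 1) equals the set of tableaux [j_1,…,j_k]^D_s in Tab_{D,ι} whose first entry satisfies j_1 ≠ ovl(n+1). -/

import Mathlib

noncomputable section

/-- The coordinate linear form `x_k` (as a coefficient vector). -/
def xc (k : ℕ) : ℕ → ℚ := fun l => if l = k then 1 else 0

/-- Cartan matrix of type `A_n`. -/
def cartanA (_n : ℕ) (i j : ℕ) : ℤ :=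
  if i = j then 2 else if i + 1 = j ∨ j + 1 = i then -1 else 0

/-- Cartan matrix of type `B_n`. -/
def cartanB (n : ℕ) (i j : ℕ) : ℤ :=
  if i = j then 2
  else if i = n ∧ j = n - 1 then -2
  else if i + 1 = j ∨ j + 1 = i then -1 else 0

/-- Cartan matrix of type `C_n`. -/
def cartanC (n : ℕ) (i j : ℕ) : ℤ :=
  if i = j then 2
  else if i = n - 1 ∧ j = n then -2
  else if i + 1 = j ∨ j + 1 = i then -1 else 0

/-- Cartan matrix of type `D_n`. -/
def cartanD (n : ℕ) (i j : ℕ) : ℤ :=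
  if i = j then 2
  else if (i = n - 1 ∧ j = n) ∨ (i = n ∧ j = n - 1) then 0
  else if (i + 1 = j ∨ j + 1 = i) ∨ (i = n ∧ j = n - 2) ∨ (i = n - 2 ∧ j = n) then -1
  else 0

/-- `ι` (with positions indexed by `k ≥ 1`) takes values in `{1,…,n}`, has no two equal
consecutive entries, and every index occurs infinitely often. -/
def Admissible (n : ℕ) (ι : ℕ → ℕ) : Prop :=
  (∀ k, 1 ≤ k → 1 ≤ ι k ∧ ι k ≤ n) ∧
  (∀ k, 1 ≤ k → ι k ≠ ι (k + 1)) ∧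
  (∀ i, 1 ≤ i → i ≤ n → ∀ N, ∃ k, N ≤ k ∧ ι k = i)

/-- `k^+`: the next position after `k` carrying the same letter. -/
def kplus (ι : ℕ → ℕ) (k : ℕ) : ℕ := sInf {l | k < l ∧ ι l = ι k}

/-- `k^-`: the previous position (`≥ 1`) carrying the same letter, `0` if none. -/
def kminus (ι : ℕ → ℕ) (k : ℕ) : ℕ := sSup {l | 0 < l ∧ l < k ∧ ι l = ι k}

/-- The linear form `β_k` (with `β_0 = 0`). -/
def beta (A : ℕ → ℕ → ℤ) (ι : ℕ → ℕ) (k : ℕ) : ℕ → ℚ :=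
  if k = 0 then 0
  else xc k + (∑ j ∈ Finset.Ioo k (kplus ι k), (A (ι k) (ι j) : ℚ) • xc j) + xc (kplus ι k)

/-- The piecewise-linear operator `S_k`. -/
def Sop (A : ℕ → ℕ → ℤ) (ι : ℕ → ℕ) (k : ℕ) (φ : ℕ → ℚ) : ℕ → ℚ :=
  if 0 < φ k then φ - φ k • beta A ι k
  else φ - φ k • beta A ι (kminus ι k)

/-- Membership in `Ξ_ι`: forms obtained from some `x_{j_0}` by finitely many operators `S_k`. -/
inductive XiMem (A : ℕ → ℕ → ℤ) (ι : ℕ → ℕ) : (ℕ → ℚ) → Prop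
  | base (k : ℕ) (hk : 1 ≤ k) : XiMem A ι (xc k)
  | step (k : ℕ) (hk : 1 ≤ k) (φ : ℕ → ℚ) (h : XiMem A ι φ) : XiMem A ι (Sop A ι k φ)

/-- The set `Ξ_ι`. -/
def Xi (A : ℕ → ℕ → ℤ) (ι : ℕ → ℕ) : Set (ℕ → ℚ) := { φ | XiMem A ι φ }

/-- Forms obtained from a set `g` of generators by finitely many operators `S_k`. -/
inductive XiMemFrom (A : ℕ → ℕ → ℤ) (ι : ℕ → ℕ) (g : Set (ℕ → ℚ)) : (ℕ → ℚ) → Prop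
  | base (φ : ℕ → ℚ) (h : φ ∈ g) : XiMemFrom A ι g φ
  | step (k : ℕ) (hk : 1 ≤ k) (φ : ℕ → ℚ) (h : XiMemFrom A ι g φ) :
      XiMemFrom A ι g (Sop A ι k φ)

/-- `ι` is adapted to the Cartan matrix `A`: for `i ≠ j` with `a_{i,j} ≠ 0`, consecutive
members of the subsequence of `ι` consisting of the letters `i`, `j` are distinct. -/
def Adapted (n : ℕ) (A : ℕ → ℕ → ℤ) (ι : ℕ → ℕ) : Prop :=
  ∀ i j, 1 ≤ i → i ≤ n → 1 ≤ j → j ≤ n → i ≠ j → A i j ≠ 0 →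
    ∀ k l, 1 ≤ k → k < l → (ι k = i ∨ ι k = j) → (ι l = i ∨ ι l = j) →
      (∀ m, k < m → m < l → ι m ≠ i ∧ ι m ≠ j) → ι k ≠ ι l

/-- Position of the first occurrence of the letter `i` in `ι`. -/
def firstOcc (ι : ℕ → ℕ) (i : ℕ) : ℕ := sInf {k | 1 ≤ k ∧ ι k = i}

/-- `p_{i,j} = 1` iff the first occurrence of `i` precedes the first occurrence of `j`. -/
def pval (ι : ℕ → ℕ) (i j : ℕ) : ℕ := if firstOcc ι i < firstOcc ι j then 1 else 0

/-- The function `P(k)` for types A, B, C (and `P(k) = 0` for `k > n`, `k ≤ 1`). -/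
def PABC (ι : ℕ → ℕ) (n k : ℕ) : ℕ :=
  if k ≤ n then ∑ t ∈ Finset.Icc 2 k, pval ι t (t - 1) else 0

/-- The function `P(k)` for type D. -/
def PD (ι : ℕ → ℕ) (n k : ℕ) : ℕ :=
  if k = n then (∑ t ∈ Finset.Icc 2 (n - 2), pval ι t (t - 1)) + pval ι n (n - 2)
  else if k ≤ n then ∑ t ∈ Finset.Icc 2 k, pval ι t (t - 1) else 0

/-- `occPos ι j s`: the position of the `s`-th occurrence of the letter `j` in `ι`
(`0` for `s = 0`). -/
def occPos (ι : ℕ → ℕ) (j : ℕ) : ℕ → ℕ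
  | 0 => 0
  | s + 1 => sInf {k | occPos ι j s < k ∧ ι k = j}

/-- The double-indexed coordinate form `x_{s,j}`, with the conventions
`x_{s,0} = x_{s,n+1} = 0` and `x_{s,j} = 0` for `s ≤ 0`. -/
def xsj (ι : ℕ → ℕ) (n : ℕ) (s : ℤ) (j : ℕ) : ℕ → ℚ :=
  if 1 ≤ s ∧ 1 ≤ j ∧ j ≤ n then xc (occPos ι j s.toNat) else 0

/-- The double-indexed form `β_{s,j}`. -/
def betasj (A : ℕ → ℕ → ℤ) (ι : ℕ → ℕ) (s : ℤ) (j : ℕ) : ℕ → ℚ :=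
  beta A ι (occPos ι j s.toNat)

/-- The double-indexed operator `S_{m,j}`. -/
def Ssj (A : ℕ → ℕ → ℤ) (ι : ℕ → ℕ) (m j : ℕ) (φ : ℕ → ℚ) : ℕ → ℚ :=
  Sop A ι (occPos ι j m) φ

/- Entries of the ordered sets `J_X` are encoded as natural numbers:
an unbarred entry `j ∈ {1,…,n}` is encoded as `j`, a barred entry `j̄` is
encoded as `2n+1-j` (so that `n̄ = n+1, …, 1̄ = 2n` and the total order of
`J_B = J_C` is the numerical order), and the extra symbol `ovl(n+1)` of
types C and D is encoded as `0`. -/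

/-- The box of type A. -/
def boxA (ι : ℕ → ℕ) (n : ℕ) (s : ℤ) (j : ℕ) : ℕ → ℚ :=
  xsj ι n (s + (PABC ι n j : ℤ)) j - xsj ι n (s + (PABC ι n (j - 1) : ℤ) + 1) (j - 1)

/-- The box of type B. -/
def boxB (ι : ℕ → ℕ) (n : ℕ) (s : ℤ) (e : ℕ) : ℕ → ℚ :=
  if e ≤ n then
    xsj ι n (s + (PABC ι n e : ℤ)) e - xsj ι n (s + (PABC ι n (e - 1) : ℤ) + 1) (e - 1)
  else
    xsj ι n (s + (PABC ι n (2 * n - e) : ℤ) + (n : ℤ) - ((2 * n + 1 - e : ℕ) : ℤ) + 1)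
        (2 * n - e)
      - xsj ι n (s + (PABC ι n (2 * n + 1 - e) : ℤ) + (n : ℤ) - ((2 * n + 1 - e : ℕ) : ℤ) + 1)
          (2 * n + 1 - e)

/-- The box of type C (`ovl(n+1)` encoded as `0`). -/
def boxC (ι : ℕ → ℕ) (n : ℕ) (s : ℤ) (e : ℕ) : ℕ → ℚ :=
  if e = 0 then xsj ι n (s + (PABC ι n n : ℤ)) n
  else if e < n then
    xsj ι n (s + (PABC ι n e : ℤ)) e - xsj ι n (s + (PABC ι n (e - 1) : ℤ) + 1) (e - 1)
  else if e = n then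
    (2 : ℚ) • xsj ι n (s + (PABC ι n n : ℤ)) n
      - xsj ι n (s + (PABC ι n (n - 1) : ℤ) + 1) (n - 1)
  else if e = n + 1 then
    xsj ι n (s + (PABC ι n (n - 1) : ℤ) + 1) (n - 1)
      - (2 : ℚ) • xsj ι n (s + (PABC ι n n : ℤ) + 1) n
  else
    xsj ι n (s + (PABC ι n (2 * n - e) : ℤ) + (n : ℤ) - ((2 * n + 1 - e : ℕ) : ℤ) + 1)
        (2 * n - e)
      - xsj ι n (s + (PABC ι n (2 * n + 1 - e) : ℤ) + (n : ℤ) - ((2 * n + 1 - e : ℕ) : ℤ) + 1)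
          (2 * n + 1 - e)

/-- The box of type D (`ovl(n+1)` encoded as `0`, `n̄` as `n+1`, `ovl(n-1)` as `n+2`). -/
def boxD (ι : ℕ → ℕ) (n : ℕ) (s : ℤ) (e : ℕ) : ℕ → ℚ :=
  if e = 0 then xsj ι n (s + (PD ι n n : ℤ)) n
  else if e ≤ n - 2 then
    xsj ι n (s + (PD ι n e : ℤ)) e - xsj ι n (s + (PD ι n (e - 1) : ℤ) + 1) (e - 1)
  else if e = n - 1 then
    xsj ι n (s + (PD ι n (n - 1) : ℤ)) (n - 1) + xsj ι n (s + (PD ι n n : ℤ)) n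
      - xsj ι n (s + (PD ι n (n - 2) : ℤ) + 1) (n - 2)
  else if e = n then
    xsj ι n (s + (PD ι n n : ℤ)) n - xsj ι n (s + (PD ι n (n - 1) : ℤ) + 1) (n - 1)
  else if e = n + 1 then
    xsj ι n (s + (PD ι n (n - 1) : ℤ)) (n - 1) - xsj ι n (s + (PD ι n n : ℤ) + 1) n
  else if e = n + 2 then
    xsj ι n (s + (PD ι n (n - 2) : ℤ) + 1) (n - 2)
      - xsj ι n (s + (PD ι n (n - 1) : ℤ) + 1) (n - 1)
      - xsj ι n (s + (PD ι n n : ℤ) + 1) n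
  else
    xsj ι n (s + (PD ι n (2 * n - e) : ℤ) + (n : ℤ) - ((2 * n + 1 - e : ℕ) : ℤ)) (2 * n - e)
      - xsj ι n (s + (PD ι n (2 * n + 1 - e) : ℤ) + (n : ℤ) - ((2 * n + 1 - e : ℕ) : ℤ))
          (2 * n + 1 - e)

/-- The column tableau `[j_1,…,j_k]_s = Σ_{i=1}^k box_{s+k-i}(j_i)`. -/
def tab (box : ℤ → ℕ → ℕ → ℚ) (s : ℤ) (k : ℕ) (j : ℕ → ℕ) : ℕ → ℚ :=
  ∑ i ∈ Finset.Icc 1 k, box (s + (k : ℤ) - (i : ℤ)) (j i)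

/-- The set `Tab_{A,ι}`. -/
def TabA (ι : ℕ → ℕ) (n : ℕ) : Set (ℕ → ℚ) :=
  { T | ∃ (k : ℕ) (s : ℤ) (j : ℕ → ℕ),
      1 ≤ k ∧ k ≤ n ∧
      (∀ i, 1 ≤ i → i ≤ k → 1 ≤ j i ∧ j i ≤ n + 1) ∧
      (∀ i, 1 ≤ i → i < k → j i < j (i + 1)) ∧
      1 - (PABC ι n k : ℤ) ≤ s ∧
      T = tab (boxA ι n) s k j }

/-- `|·|` on encoded entries of `J_B = J_C`. -/
def absJ (n e : ℕ) : ℕ := if e ≤ n then e else 2 * n + 1 - e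

/-- The set `Tab_{B,ι}`. -/
def TabB (ι : ℕ → ℕ) (n : ℕ) : Set (ℕ → ℚ) :=
  { T | ∃ (k : ℕ) (s : ℤ) (j : ℕ → ℕ),
      1 ≤ k ∧ k ≤ n ∧
      (∀ i, 1 ≤ i → i ≤ k → 1 ≤ j i ∧ j i ≤ 2 * n) ∧
      (∀ i, 1 ≤ i → i < k → j i < j (i + 1)) ∧
      (k = n → ∀ l m, 1 ≤ l → l < m → m ≤ k → absJ n (j l) ≠ absJ n (j m)) ∧
      1 - (PABC ι n k : ℤ) ≤ s ∧
      T = tab (boxB ι n) s k j }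

/-- Defining conditions of `Tab_{C,ι}` on the data `(k,s,j)`. -/
def TabCcond (ι : ℕ → ℕ) (n : ℕ) (k : ℕ) (s : ℤ) (j : ℕ → ℕ) : Prop :=
  (1 ≤ k ∧ k ≤ n - 1 ∧
    (∀ i, 1 ≤ i → i ≤ k → 1 ≤ j i ∧ j i ≤ 2 * n) ∧
    (∀ i, 1 ≤ i → i < k → j i < j (i + 1)) ∧
    1 - (PABC ι n k : ℤ) ≤ s)
  ∨
  (j 1 = 0 ∧ 1 ≤ k ∧ k ≤ n + 1 ∧
    (∀ i, 2 ≤ i → i ≤ k → n + 1 ≤ j i ∧ j i ≤ 2 * n) ∧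
    (∀ i, 2 ≤ i → i < k → j i < j (i + 1)) ∧
    1 - (PABC ι n n : ℤ) ≤ s)

/-- The set `Tab_{C,ι}`. -/
def TabC (ι : ℕ → ℕ) (n : ℕ) : Set (ℕ → ℚ) :=
  { T | ∃ k s j, TabCcond ι n k s j ∧ T = tab (boxC ι n) s k j }

/-- The partial order on (encoded) `J_D`: `a ≤ b` iff `a = b`, or `a < b` numerically and
`(a,b)` is not the incomparable pair `(n, n̄)`. -/
def leD (n a b : ℕ) : Prop := a = b ∨ (a < b ∧ ¬(a = n ∧ b = n + 1))

/-- Defining conditions of `Tab_{D,ι}` on the data `(k,s,j)`. -/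
def TabDcond (ι : ℕ → ℕ) (n : ℕ) (k : ℕ) (s : ℤ) (j : ℕ → ℕ) : Prop :=
  (1 ≤ k ∧ k ≤ n - 2 ∧
    (∀ i, 1 ≤ i → i ≤ k → 1 ≤ j i ∧ j i ≤ 2 * n) ∧
    (∀ i, 1 ≤ i → i < k → ¬ leD n (j (i + 1)) (j i)) ∧
    1 - (PD ι n k : ℤ) ≤ s)
  ∨
  (j 1 = 0 ∧ 1 ≤ k ∧ k ≤ n + 1 ∧
    (∀ i, 2 ≤ i → i ≤ k → n + 1 ≤ j i ∧ j i ≤ 2 * n) ∧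
    (∀ i, 2 ≤ i → i < k → j i < j (i + 1)) ∧
    (k % 2 = 0 → 1 - (PD ι n (n - 1) : ℤ) ≤ s) ∧
    (k % 2 = 1 → 1 - (PD ι n n : ℤ) ≤ s))

/-- The set `Tab_{D,ι}`. -/
def TabD (ι : ℕ → ℕ) (n : ℕ) : Set (ℕ → ℚ) :=
  { T | ∃ k s j, TabDcond ι n k s j ∧ T = tab (boxD ι n) s k j }

end

/-!
Call `(v, t)` the position of the occurrence of `v` in `ι` with number `t + P(v)`. In these
coordinates adaptedness makes `β` at `(v, t)` a form in the nodes near `(v, t)` that no longer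
depends on `P`. The entries of a tableau are the vertices of the type `D` vector crystal: along an
arrow `e → e'` of colour `v` and offset `d` the boxes of level `l` differ by `β` at `(v, l + d)`,
and the coefficient of a tableau at a node is the number of rows that a matching arrow leaves minus
the number of rows that one enters. A row that is left can be moved along its arrow unless the next
row is entered, and such pairs of rows cancel in the count. Hence the tableaux of columns are closed
under the `S_l`. Conversely, every column other than `1, …, k` can be made smaller, either by moving
an entry back along an arrow at a node with coefficient zero, which `S_l` undoes, or by exchanging
two entries without changing the form; the tableau of `1, …, k` telescopes to some `x_{r,k}`.
-/

open Filter Set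

section Interlacing

variable {α : Type*} [LinearOrder α] {f g : ℕ → α} {m r r' : ℕ}

/-- Between any two consecutive terms of `f` (indexed from `1`) there is a term of `g`. -/
def Interlaced (f g : ℕ → α) : Prop := ∀ m, 1 ≤ m → ∃ r, 1 ≤ r ∧ g r ∈ Ioo (f m) (f (m + 1))

theorem Interlaced.succ_lt_succ (hgf : Interlaced g f) (hf : StrictMono f) (hr : 1 ≤ r)
    (h : f m < g r) : f (m + 1) < g (r + 1) := by
  obtain ⟨m', -, hm', hm''⟩ := hgf r hr
  exact (hf.monotone (hf.lt_iff_lt.1 (h.trans hm'))).trans_lt hm''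

theorem Interlaced.mem_Ioo_add (hfg : Interlaced f g) (hgf : Interlaced g f) (hf : StrictMono f)
    (hg : StrictMono g) (hne : f 1 ≠ g 1) (hm : 1 ≤ m) :
    g (m + if g 1 < f 1 then 1 else 0) ∈ Ioo (f m) (f (m + 1)) := by
  induction m, hm using Nat.le_induction with
  | base =>
    split_ifs with h
    · obtain ⟨m', hm', -, h'⟩ := hgf 1 le_rfl
      exact ⟨(hf.monotone hm').trans_lt h', hfg.succ_lt_succ hg le_rfl h⟩
    · obtain ⟨r', hr', -, h'⟩ := hfg 1 le_rfl
      exact ⟨(not_lt.1 h).lt_of_ne hne, (hg.monotone hr').trans_lt h'⟩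
  | succ m hm ih =>
    rw [Nat.add_right_comm m 1 (ite _ _ _)]
    exact ⟨hgf.succ_lt_succ hf (by omega) ih.1, hfg.succ_lt_succ hg (by omega) ih.2⟩

theorem Interlaced.le_of_mem_Ioo (hgf : Interlaced g f) (hf : StrictMono f) (hg : StrictMono g)
    (hr : 1 ≤ r) (h : g r ∈ Ioo (f m) (f (m + 1))) (h' : g r' ∈ Ioo (f m) (f (m + 1))) :
    r' ≤ r := by
  by_contra! hlt
  obtain ⟨m', -, hm', hm''⟩ := hgf r hr
  have h₁ := hf.lt_iff_lt.1 (h.1.trans hm')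
  have h₂ := hf.lt_iff_lt.1 ((hm''.trans_le (hg.monotone hlt)).trans h'.2)
  omega

theorem Interlaced.mem_Ioo_iff (hfg : Interlaced f g) (hgf : Interlaced g f) (hf : StrictMono f)
    (hg : StrictMono g) (hne : f 1 ≠ g 1) (hm : 1 ≤ m) (hr : 1 ≤ r) :
    g r ∈ Ioo (f m) (f (m + 1)) ↔ r = m + if g 1 < f 1 then 1 else 0 := by
  have key := hfg.mem_Ioo_add hgf hf hg hne hm
  refine ⟨fun h ↦ le_antisymm ?_ ?_, fun h ↦ h ▸ key⟩
  · exact hgf.le_of_mem_Ioo hf hg (by omega) key h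
  · exact hgf.le_of_mem_Ioo hf hg hr h key

end Interlacing

section Occurrences

variable {ι : ℕ → ℕ} {i j l s : ℕ}

theorem occPos_succ_spec (hi : ∃ᶠ k in atTop, ι k = i) (s : ℕ) :
    occPos ι i s < occPos ι i (s + 1) ∧ ι (occPos ι i (s + 1)) = i :=
  Nat.sInf_mem (frequently_atTop'.1 hi (occPos ι i s))

theorem occPos_strictMono (hi : ∃ᶠ k in atTop, ι k = i) : StrictMono (occPos ι i) :=
  strictMono_nat_of_lt_succ fun s ↦ (occPos_succ_spec hi s).1

theorem apply_occPos (hi : ∃ᶠ k in atTop, ι k = i) (hs : 1 ≤ s) : ι (occPos ι i s) = i := by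
  obtain ⟨s, rfl⟩ := Nat.exists_eq_add_of_le' hs
  exact (occPos_succ_spec hi s).2

theorem occPos_pos (hi : ∃ᶠ k in atTop, ι k = i) (hs : 1 ≤ s) : 1 ≤ occPos ι i s :=
  hs.trans ((occPos_strictMono hi).le_apply)

theorem occPos_succ_le (h : occPos ι i s < l) (hl : ι l = i) : occPos ι i (s + 1) ≤ l :=
  Nat.sInf_le ⟨h, hl⟩

theorem exists_occPos_eq (hi : ∃ᶠ k in atTop, ι k = i) (hl : 1 ≤ l) (h : ι l = i) :
    ∃ s, 1 ≤ s ∧ occPos ι i s = l := by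
  by_contra! hne
  have hlt (s : ℕ) : occPos ι i s < l := by
    induction s with
    | zero => exact hl
    | succ s ih => exact (occPos_succ_le ih h).lt_of_ne (hne _ (by omega))
  exact (hlt l).not_ge (occPos_strictMono hi).le_apply

theorem kplus_occPos (hi : ∃ᶠ k in atTop, ι k = i) (hs : 1 ≤ s) :
    kplus ι (occPos ι i s) = occPos ι i (s + 1) := by
  rw [kplus, apply_occPos hi hs, occPos]

theorem kminus_occPos_succ (hi : ∃ᶠ k in atTop, ι k = i) (s : ℕ) :
    kminus ι (occPos ι i (s + 1)) = occPos ι i s := by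
  have hlast {l : ℕ} (hl : l < occPos ι i (s + 1)) (h : ι l = i) : l ≤ occPos ι i s :=
    not_lt.1 fun h' ↦ hl.not_ge (occPos_succ_le h' h)
  rw [kminus, (occPos_succ_spec hi s).2]
  rcases Nat.eq_zero_or_pos s with rfl | hs
  · exact (congrArg sSup (eq_empty_of_forall_notMem fun l hl ↦
      hl.1.not_ge (hlast hl.2.1 hl.2.2))).trans csSup_empty
  · exact IsGreatest.csSup_eq ⟨⟨occPos_pos hi hs, (occPos_succ_spec hi s).1, apply_occPos hi hs⟩,
      fun l hl ↦ hlast hl.2.1 hl.2.2⟩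

variable {n : ℕ} {A : ℕ → ℕ → ℤ}

theorem Admissible.frequently (h : Admissible n ι) (hi : i ∈ Icc 1 n) :
    ∃ᶠ k in atTop, ι k = i :=
  frequently_atTop.2 (h.2.2 i hi.1 hi.2)

theorem Adapted.interlaced (h : Adapted n A ι) (hadm : Admissible n ι) (hi : i ∈ Icc 1 n)
    (hj : j ∈ Icc 1 n) (hij : i ≠ j) (hA : A i j ≠ 0) :
    Interlaced (occPos ι i) (occPos ι j) := by
  have hfi := hadm.frequently hi
  intro m hm
  by_contra! hcon
  refine h i j hi.1 hi.2 hj.1 hj.2 hij hA (occPos ι i m) (occPos ι i (m + 1)) (occPos_pos hfi hm)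
    (occPos_succ_spec hfi m).1 (.inl (apply_occPos hfi hm)) (.inl (occPos_succ_spec hfi m).2)
    (fun l hl hl' ↦ ⟨fun hli ↦ hl'.not_ge (occPos_succ_le hl hli), fun hlj ↦ ?_⟩)
    ((apply_occPos hfi hm).trans (occPos_succ_spec hfi m).2.symm)
  obtain ⟨r, hr, rfl⟩ := exists_occPos_eq (hadm.frequently hj) (by omega) hlj
  exact hcon r hr ⟨hl, hl'⟩

theorem Admissible.firstOcc_ne (h : Admissible n ι) (hi : i ∈ Icc 1 n) (hj : j ∈ Icc 1 n)
    (hij : i ≠ j) : firstOcc ι i ≠ firstOcc ι j := fun heq ↦ hij <| by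
  rw [← apply_occPos (h.frequently hi) le_rfl, ← apply_occPos (h.frequently hj) le_rfl]
  exact congrArg ι heq

theorem Adapted.occPos_mem_Ioo_iff (h : Adapted n A ι) (hadm : Admissible n ι)
    (hi : i ∈ Icc 1 n) (hj : j ∈ Icc 1 n) (hij : i ≠ j) (hA : A i j ≠ 0) (hA' : A j i ≠ 0)
    {r : ℕ} (hs : 1 ≤ s) (hr : 1 ≤ r) :
    occPos ι j r ∈ Ioo (occPos ι i s) (occPos ι i (s + 1)) ↔ r = s + pval ι j i :=
  (h.interlaced hadm hi hj hij hA).mem_Ioo_iff (h.interlaced hadm hj hi hij.symm hA')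
    (occPos_strictMono (hadm.frequently hi)) (occPos_strictMono (hadm.frequently hj))
    (hadm.firstOcc_ne hi hj hij) hs hr

theorem Admissible.pval_add_pval (h : Admissible n ι) (hi : i ∈ Icc 1 n) (hj : j ∈ Icc 1 n)
    (hij : i ≠ j) : pval ι i j + pval ι j i = 1 := by
  have := h.firstOcc_ne hi hj hij
  unfold pval
  split_ifs <;> omega

end Occurrences

section Beta

variable {ι : ℕ → ℕ} {A : ℕ → ℕ → ℤ} {n i j k r s v w : ℕ}

theorem beta_zero (A : ℕ → ℕ → ℤ) (ι : ℕ → ℕ) : beta A ι 0 = 0 := if_pos rfl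

theorem beta_apply (hk : k ≠ 0) (l : ℕ) :
    beta A ι k l = (if l = k then 1 else 0) +
      (if l ∈ Ioo k (kplus ι k) then (A (ι k) (ι l) : ℚ) else 0) +
      (if l = kplus ι k then 1 else 0) := by
  rw [beta, if_neg hk]
  simp only [Pi.add_apply, Finset.sum_apply, Pi.smul_apply, smul_eq_mul, xc, mul_ite, mul_one,
    mul_zero, Finset.sum_ite_eq, Finset.mem_Ioo, mem_Ioo]

theorem Admissible.occPos_inj (hadm : Admissible n ι) (hi : i ∈ Icc 1 n) (hj : j ∈ Icc 1 n)
    (hs : 1 ≤ s) (hr : 1 ≤ r) : occPos ι j r = occPos ι i s ↔ j = i ∧ r = s := by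
  refine ⟨fun h ↦ ?_, fun ⟨hji, hrs⟩ ↦ hji ▸ hrs ▸ rfl⟩
  obtain rfl : j = i := by
    rw [← apply_occPos (hadm.frequently hi) hs, ← h, apply_occPos (hadm.frequently hj) hr]
  exact ⟨rfl, (occPos_strictMono (hadm.frequently hj)).injective h⟩

theorem Adapted.beta_occPos (hadap : Adapted n A ι) (hadm : Admissible n ι)
    (hA : A i j ≠ 0 → A j i ≠ 0) (hi : i ∈ Icc 1 n) (hj : j ∈ Icc 1 n) (hs : 1 ≤ s)
    (hr : 1 ≤ r) :
    beta A ι (occPos ι i s) (occPos ι j r) =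
      if j = i then (if r = s ∨ r = s + 1 then 1 else 0)
      else if r = s + pval ι j i then (A i j : ℚ) else 0 := by
  have hfi := hadm.frequently hi
  rw [beta_apply (Nat.one_le_iff_ne_zero.1 (occPos_pos hfi hs)), kplus_occPos hfi hs]
  simp only [hadm.occPos_inj hi hj hs hr, hadm.occPos_inj hi hj s.succ_pos hr, apply_occPos hfi hs,
    apply_occPos (hadm.frequently hj) hr]
  rcases eq_or_ne j i with rfl | hji
  · have hIoo : occPos ι j r ∉ Ioo (occPos ι j s) (occPos ι j (s + 1)) := by
      rw [mem_Ioo, (occPos_strictMono hfi).lt_iff_lt, (occPos_strictMono hfi).lt_iff_lt]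
      omega
    rw [if_neg hIoo]
    grind
  · rcases eq_or_ne (A i j) 0 with h0 | h0
    · simp [hji, h0]
    · simp [hji, hadap.occPos_mem_Ioo_iff hadm hi hj hji.symm h0 (hA h0) hs hr]

theorem cartanD_comm (n i j : ℕ) : cartanD n i j = cartanD n j i := by
  unfold cartanD
  split_ifs <;> omega

end Beta

section Shift

variable {ι : ℕ → ℕ} {n k v w : ℕ}

theorem PD_succ (hv : 1 ≤ v) (hvn : v + 2 ≤ n) :
    PD ι n (v + 1) = PD ι n v + pval ι (v + 1) v := by
  rw [PD, if_neg (by omega), if_pos (by omega), PD, if_neg (by omega), if_pos (by omega),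
    Finset.sum_Icc_succ_top (by omega), Nat.add_sub_cancel]

theorem PD_last (hn : 4 ≤ n) : PD ι n n = PD ι n (n - 2) + pval ι n (n - 2) := by
  rw [PD, if_pos rfl, PD, if_neg (by omega), if_pos (by omega)]

theorem pval_le_one (ι : ℕ → ℕ) (i j : ℕ) : pval ι i j ≤ 1 := by
  unfold pval
  split_ifs <;> omega

theorem PD_le_PD_add (hn : 4 ≤ n) (hk : 1 ≤ k) (hkn : k + 2 ≤ n) (hv : 1 ≤ v) (hvn : v ≤ n) :
    PD ι n k ≤ PD ι n v + (k - v) := by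
  have mono {a b : ℕ} (ha : 1 ≤ a) (hab : a ≤ b) (hb : b + 1 ≤ n) :
      PD ι n a ≤ PD ι n b ∧ PD ι n b ≤ PD ι n a + (b - a) := by
    induction b, hab using Nat.le_induction with
    | base => simp
    | succ b hab ih =>
      have := ih (by omega)
      have := pval_le_one ι (b + 1) b
      have := PD_succ (ι := ι) (n := n) (v := b) (by omega) (by omega)
      omega
  rcases le_total v k with hvk | hkv
  · exact (mono hv hvk (by omega)).2
  rcases hvn.eq_or_lt with rfl | hvn
  · have := (mono hk (b := v - 2) (by omega) (by omega)).1
    have := PD_last (ι := ι) hn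
    omega
  · exact Nat.le_add_right_of_le (mono hk hkv (by omega)).1

theorem Admissible.PD_add_pval (hadm : Admissible n ι) (hn : 4 ≤ n) (hv : v ∈ Icc 1 n)
    (hw : w ∈ Icc 1 n) (hvw : w ≠ v) (hA : cartanD n v w ≠ 0) :
    PD ι n v + pval ι w v = PD ι n w + if w < v then 1 else 0 := by
  wlog hlt : w < v generalizing v w
  · have hflip := this hw hv hvw.symm (by rwa [cartanD_comm]) (by omega)
    have hsum := hadm.pval_add_pval hv hw hvw.symm
    rw [if_pos (by omega)] at hflip
    rw [if_neg hlt]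
    omega
  have hsum := hadm.pval_add_pval hv hw hvw.symm
  rw [if_pos hlt]
  obtain ⟨rfl, hwn⟩ | ⟨rfl, rfl⟩ : (v = w + 1 ∧ w + 2 ≤ n) ∨ (v = n ∧ w = n - 2) := by
    unfold cartanD at hA
    split_ifs at hA <;> simp only [mem_Icc] at hv hw <;> omega
  · have := PD_succ (ι := ι) hw.1 hwn
    omega
  · have := PD_last (ι := ι) hn
    omega

end Shift

section Nodes

variable {ι : ℕ → ℕ} {n l v w : ℕ} {t u z : ℤ}

/-- The position in `ι` of the node `(v, t)`, that is of the occurrence number `t + P(v)` of the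
letter `v`. In these shifted coordinates `P` disappears from the forms `β` and from the boxes.
It is `0` when `t + P(v) ≤ 0`, see `IsNode`. -/
noncomputable def nodePos (ι : ℕ → ℕ) (n v : ℕ) (t : ℤ) : ℕ := occPos ι v (t + PD ι n v).toNat

/-- The pairs `(v, t)` that parametrize the positions `≥ 1` through `nodePos`. -/
structure IsNode (ι : ℕ → ℕ) (n v : ℕ) (t : ℤ) : Prop where
  mem_Icc : v ∈ Icc 1 n
  one_le : 1 ≤ t + PD ι n v

theorem IsNode.one_le_toNat (h : IsNode ι n v t) : 1 ≤ (t + PD ι n v).toNat := by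
  have := h.one_le
  omega

theorem IsNode.succ (h : IsNode ι n v t) : IsNode ι n v (t + 1) :=
  ⟨h.mem_Icc, by have := h.one_le; omega⟩

theorem nodePos_add_one (h : 0 ≤ t + PD ι n v) :
    nodePos ι n v (t + 1) = occPos ι v ((t + PD ι n v).toNat + 1) := by
  rw [nodePos, show (t + 1 + PD ι n v).toNat = (t + PD ι n v).toNat + 1 by omega]

theorem IsNode.one_le_nodePos (h : IsNode ι n v t) (hadm : Admissible n ι) :
    1 ≤ nodePos ι n v t :=
  occPos_pos (hadm.frequently h.mem_Icc) h.one_le_toNat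

theorem IsNode.kminus_nodePos (h : IsNode ι n v t) (hadm : Admissible n ι) :
    kminus ι (nodePos ι n v t) = nodePos ι n v (t - 1) := by
  conv_lhs => rw [← sub_add_cancel t 1, nodePos_add_one (by have := h.one_le; omega)]
  exact kminus_occPos_succ (hadm.frequently h.mem_Icc) _

theorem nodePos_eq_zero (h : t + PD ι n v < 1) : nodePos ι n v t = 0 := by
  rw [nodePos, Int.toNat_of_nonpos (by omega), occPos]

theorem Admissible.exists_nodePos_eq (hadm : Admissible n ι) (hl : 1 ≤ l) :
    ∃ v t, IsNode ι n v t ∧ nodePos ι n v t = l := by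
  have hv : ι l ∈ Icc 1 n := hadm.1 l hl
  obtain ⟨s, hs, hsl⟩ := exists_occPos_eq (hadm.frequently hv) hl rfl
  refine ⟨ι l, s - PD ι n (ι l), ⟨hv, by omega⟩, ?_⟩
  rwa [nodePos, sub_add_cancel, Int.toNat_natCast]

theorem Admissible.ext_nodePos (hadm : Admissible n ι) {φ ψ : ℕ → ℚ} (h0 : φ 0 = ψ 0)
    (h : ∀ v t, IsNode ι n v t → φ (nodePos ι n v t) = ψ (nodePos ι n v t)) : φ = ψ := by
  funext l
  rcases l.eq_zero_or_pos with rfl | hl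
  · exact h0
  · obtain ⟨v, t, hvt, rfl⟩ := hadm.exists_nodePos_eq hl
    exact h v t hvt

theorem beta_nodePos (hn : 4 ≤ n) (hadm : Admissible n ι) (hadap : Adapted n (cartanD n) ι)
    (h : IsNode ι n v t) (h' : IsNode ι n w u) :
    beta (cartanD n) ι (nodePos ι n v t) (nodePos ι n w u) =
      if w = v then (if u = t ∨ u = t + 1 then 1 else 0)
      else if u = t + (if w < v then 1 else 0) then (cartanD n v w : ℚ) else 0 := by
  have ht := h.one_le
  have hu := h'.one_le
  rw [nodePos, nodePos, hadap.beta_occPos hadm (by rw [cartanD_comm]; exact id) h.mem_Icc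
    h'.mem_Icc h.one_le_toNat h'.one_le_toNat]
  rcases eq_or_ne w v with rfl | hwv
  · simp only [if_true]
    congr 1
    grind
  rcases eq_or_ne (cartanD n v w) 0 with h0 | h0
  · simp [hwv, h0]
  · have hP := hadm.PD_add_pval hn h.mem_Icc h'.mem_Icc hwv h0
    rw [if_neg hwv, if_neg hwv]
    congr 1
    grind

theorem beta_apply_zero (A : ℕ → ℕ → ℤ) (hadm : Admissible n ι) (h : IsNode ι n v t) :
    beta A ι (nodePos ι n v t) 0 = 0 := by
  have hpos := h.one_le_nodePos hadm
  have hpos' := h.succ.one_le_nodePos hadm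
  rw [nodePos_add_one (by have := h.one_le; omega),
    ← kplus_occPos (hadm.frequently h.mem_Icc) h.one_le_toNat, ← nodePos] at hpos'
  rw [beta_apply (by omega), if_neg (by omega), if_neg (by simp), if_neg (by omega)]
  simp

theorem xsj_apply (ι : ℕ → ℕ) (n : ℕ) (z : ℤ) (v l : ℕ) :
    xsj ι n z v l = if (1 ≤ z ∧ v ∈ Icc 1 n) ∧ l = occPos ι v z.toNat then 1 else 0 := by
  rw [ite_and (1 ≤ z ∧ v ∈ Icc 1 n), xsj, ite_apply]
  rfl

theorem Admissible.xsj_apply_zero (hadm : Admissible n ι) (z : ℤ) (v : ℕ) :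
    xsj ι n z v 0 = 0 := by
  rw [xsj_apply, if_neg]
  rintro ⟨⟨hz, hv⟩, h0⟩
  have := occPos_pos (hadm.frequently hv) (s := z.toNat) (by omega)
  omega

theorem IsNode.xsj_nodePos (h : IsNode ι n w u) (hadm : Admissible n ι) (z : ℤ) (v : ℕ) :
    xsj ι n z v (nodePos ι n w u) = if v = w ∧ z = u + PD ι n w then 1 else 0 := by
  have hu := h.one_le
  rw [xsj_apply, nodePos]
  refine if_congr ⟨fun ⟨⟨hz, hv⟩, hpos⟩ ↦ ?_, ?_⟩ rfl rfl
  · rw [hadm.occPos_inj hv h.mem_Icc (Int.pos_iff_toNat_pos.1 hz) h.one_le_toNat] at hpos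
    omega
  · rintro ⟨rfl, rfl⟩
    exact ⟨⟨hu, h.mem_Icc⟩, rfl⟩

end Nodes

section Arrows

variable {ι : ℕ → ℕ} {n v d e e' : ℕ} {l t x : ℤ}

/-- `e → e'` is an arrow of colour `v` in the vector crystal of type `D_n` (a path
`1 → ⋯ → n-1`, a diamond through `n` and `n̄`, and the mirror path), in the encoding of `boxD`.
The offset `d` is such that the two boxes of level `l` at the ends of the arrow differ by the
form `β` at the node `(v, l + d)`, see `boxD_sub_boxD`. -/
def Arrow (n v d e e' : ℕ) : Prop :=
  v < n ∧ (d = 0 ∧ e = v ∧ e' = v + 1 ∨ d + v + 1 = n ∧ e + v = 2 * n ∧ e' + v = 2 * n + 1) ∨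
  v = n ∧ d = 0 ∧ (e + 1 = n ∧ e' = n + 1 ∨ e = n ∧ e' = n + 2)

/-- Some arrow of colour `v` and offset `x` leaves the vertex `e`. -/
def Leaves (n v e : ℕ) (x : ℤ) : Prop := ∃ d e', Arrow n v d e e' ∧ x = d

/-- Some arrow of colour `v` and offset `x` enters the vertex `e`. -/
def Enters (n v e : ℕ) (x : ℤ) : Prop := ∃ d e', Arrow n v d e' e ∧ x = d

theorem leaves_iff : Leaves n v e x ↔
    v < n ∧ (x = 0 ∧ e = v ∨ x + v + 1 = n ∧ e + v = 2 * n) ∨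
      v = n ∧ x = 0 ∧ (e + 1 = n ∨ e = n) := by
  unfold Leaves Arrow
  constructor
  · rintro ⟨d, e', h, rfl⟩
    omega
  · rintro (⟨hv, ⟨hx, he⟩ | ⟨hx, he⟩⟩ | ⟨hv, hx, he | he⟩)
    · exact ⟨0, v + 1, by omega⟩
    · exact ⟨n - 1 - v, 2 * n + 1 - v, by omega⟩
    · exact ⟨0, n + 1, by omega⟩
    · exact ⟨0, n + 2, by omega⟩

theorem enters_iff : Enters n v e x ↔
    v < n ∧ (x = 0 ∧ e = v + 1 ∨ x + v + 1 = n ∧ e + v = 2 * n + 1) ∨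
      v = n ∧ x = 0 ∧ (e = n + 1 ∧ 1 ≤ n ∨ e = n + 2) := by
  unfold Enters Arrow
  constructor
  · rintro ⟨d, e', h, rfl⟩
    omega
  · rintro (⟨hv, ⟨hx, he⟩ | ⟨hx, he⟩⟩ | ⟨hv, hx, he | he⟩)
    · exact ⟨0, v, by omega⟩
    · exact ⟨n - 1 - v, 2 * n - v, by omega⟩
    · exact ⟨0, n - 1, by omega⟩
    · exact ⟨0, n, by omega⟩

open Classical in
theorem IsNode.boxD_nodePos (h : IsNode ι n v t) (hn : 4 ≤ n) (hadm : Admissible n ι)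
    (he : 1 ≤ e) (hen : e ≤ 2 * n) (l : ℤ) :
    boxD ι n l e (nodePos ι n v t) =
      (if Leaves n v e (t - l) then 1 else 0) - (if Enters n v e (t - l - 1) then 1 else 0) := by
  have hv : 1 ≤ v ∧ v ≤ n := h.mem_Icc
  simp only [leaves_iff, enters_iff]
  have hx := h.xsj_nodePos hadm
  unfold boxD
  generalize PD ι n = P at *
  split_ifs <;> simp only [Pi.add_apply, Pi.sub_apply, hx] <;> grind (splits := 30)

theorem boxD_apply_zero (hadm : Admissible n ι) (l : ℤ) (e : ℕ) : boxD ι n l e 0 = 0 := by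
  unfold boxD
  split_ifs <;> simp [hadm.xsj_apply_zero]

theorem Arrow.boxD_sub_boxD (ha : Arrow n v d e e') (hn : 4 ≤ n) (hadm : Admissible n ι)
    (hadap : Adapted n (cartanD n) ι) (h : IsNode ι n v (l + d)) :
    boxD ι n l e - boxD ι n l e' = beta (cartanD n) ι (nodePos ι n v (l + d)) := by
  have hv := h.mem_Icc
  refine hadm.ext_nodePos ?_ fun w u h' ↦ ?_
  · rw [Pi.sub_apply, boxD_apply_zero hadm, boxD_apply_zero hadm, sub_zero,
      beta_apply_zero _ hadm h]
  · have hw := h'.mem_Icc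
    simp only [mem_Icc] at hv hw
    have he : 1 ≤ e ∧ e ≤ 2 * n ∧ 1 ≤ e' ∧ e' ≤ 2 * n := by unfold Arrow at ha; omega
    rw [Pi.sub_apply, h'.boxD_nodePos hn hadm he.1 he.2.1,
      h'.boxD_nodePos hn hadm he.2.2.1 he.2.2.2, beta_nodePos hn hadm hadap h h']
    simp only [leaves_iff, enters_iff]
    unfold cartanD
    push_cast
    rcases ha with ⟨hvn, ⟨rfl, rfl, rfl⟩ | ⟨hd, hev, hev'⟩⟩ |
      ⟨rfl, rfl, ⟨hev, rfl⟩ | ⟨rfl, rfl⟩⟩ <;>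
      grind (splits := 30)

end Arrows

section SumUpdate

variable {κ α M : Type*} [DecidableEq κ] [AddCommMonoid M] {S : Finset κ} {i : κ}

theorem sum_apply_update_add (hi : i ∈ S) (g : κ → α → M) (j : κ → α) (b : α) :
    ∑ x ∈ S, g x (Function.update j i b x) + g i (j i) = ∑ x ∈ S, g x (j x) + g i b := by
  have herase : ∑ x ∈ S.erase i, g x (Function.update j i b x) = ∑ x ∈ S.erase i, g x (j x) :=
    Finset.sum_congr rfl fun x hx ↦ by rw [Function.update_of_ne (Finset.ne_of_mem_erase hx)]
  rw [← Finset.add_sum_erase S _ hi, ← Finset.add_sum_erase S (fun x ↦ g x (j x)) hi, herase,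
    Function.update_self]
  abel

end SumUpdate

section Columns

variable {ι : ℕ → ℕ} {n k v d e e' i : ℕ} {j : ℕ → ℕ} {s t x : ℤ}

theorem not_leD_iff : ¬ leD n e' e ↔ e < e' ∨ e = n + 1 ∧ e' = n := by
  unfold leD
  omega

/-- The columns with `k` rows of type `D_n`: every entry fails to be `≥` the next one. The entries
are the values of `j` on `{1, …, k}`. -/
structure IsColumn (n k : ℕ) (j : ℕ → ℕ) : Prop where
  entry_mem : ∀ i, 1 ≤ i → i ≤ k → 1 ≤ j i ∧ j i ≤ 2 * n
  not_leD_succ : ∀ i, 1 ≤ i → i < k → ¬ leD n (j (i + 1)) (j i)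

theorem IsColumn.update (hj : IsColumn n k j) (he : 1 ≤ e) (hen : e ≤ 2 * n)
    (hpred : ∀ a, 1 ≤ a → a + 1 = i → ¬ leD n e (j a))
    (hsucc : i < k → ¬ leD n (j (i + 1)) e) : IsColumn n k (Function.update j i e) := by
  refine ⟨fun a ha hak ↦ ?_, fun a ha hak ↦ ?_⟩
  · rcases eq_or_ne a i with rfl | hai
    · rw [Function.update_self]
      exact ⟨he, hen⟩
    · rw [Function.update_of_ne hai]
      exact hj.entry_mem a ha hak
  · rcases eq_or_ne a i with rfl | hai
    · rw [Function.update_self, Function.update_of_ne (by omega)]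
      exact hsucc hak
    rw [Function.update_of_ne hai]
    rcases eq_or_ne (a + 1) i with rfl | hai'
    · rw [Function.update_self]
      exact hpred a ha rfl
    · rw [Function.update_of_ne hai']
      exact hj.not_leD_succ a ha hak

theorem Arrow.isColumn_update_target (ha : Arrow n v d (j i) e') (hj : IsColumn n k j)
    (hv : 1 ≤ v) (hn : 4 ≤ n) (hi : i ∈ Icc 1 k)
    (hsucc : i < k → ¬ Enters n v (j (i + 1)) d) : IsColumn n k (Function.update j i e') := by
  have hik := hi.2
  refine hj.update ?_ ?_ (fun a h1 hai ↦ ?_) fun hlt ↦ ?_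
  · unfold Arrow at ha; omega
  · unfold Arrow at ha; omega
  · subst hai
    have hle := hj.not_leD_succ a h1 (by omega)
    rw [not_leD_iff] at *
    unfold Arrow at ha
    omega
  · have hle := hj.not_leD_succ i hi.1 hlt
    have hent := hsucc hlt
    rw [enters_iff] at hent
    rw [not_leD_iff] at *
    unfold Arrow at ha
    omega

theorem Arrow.isColumn_update_source (ha : Arrow n v d e (j i)) (hj : IsColumn n k j)
    (hv : 1 ≤ v) (hn : 4 ≤ n) (hi : i ∈ Icc 1 k)
    (hpred : ∀ a, 1 ≤ a → a + 1 = i → ¬ Leaves n v (j a) d) :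
    IsColumn n k (Function.update j i e) := by
  have hik := hi.2
  refine hj.update ?_ ?_ (fun a h1 hai ↦ ?_) fun hlt ↦ ?_
  · unfold Arrow at ha; omega
  · unfold Arrow at ha; omega
  · have hlv := hpred a h1 hai
    subst hai
    have hle := hj.not_leD_succ a h1 (by omega)
    rw [leaves_iff] at hlv
    rw [not_leD_iff] at *
    unfold Arrow at ha
    omega
  · have hle := hj.not_leD_succ i hi.1 hlt
    rw [not_leD_iff] at *
    unfold Arrow at ha
    omega

theorem tab_update (box : ℤ → ℕ → ℕ → ℚ) (s : ℤ) (j : ℕ → ℕ) (e : ℕ) (hi : i ∈ Icc 1 k) :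
    tab box s k (Function.update j i e) = tab box s k j - (box (s + k - i) (j i) -
      box (s + k - i) e) := by
  have := sum_apply_update_add (Finset.mem_Icc.2 hi) (fun x : ℕ ↦ box (s + k - x)) j e
  rw [tab, tab, sub_sub_eq_add_sub, ← this, add_sub_cancel_right]

open Classical in
/-- The rows of the column `j` that an arrow of colour `v` leaves and that contribute to the
coefficient of a tableau at the node `(v, s + k + x)`. -/
noncomputable def leavingRows (n k : ℕ) (j : ℕ → ℕ) (v : ℕ) (x : ℤ) : Finset ℕ :=
  {i ∈ Finset.Icc 1 k | Leaves n v (j i) (x + i)}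

open Classical in
/-- The rows of the column `j` that an arrow of colour `v` enters and that contribute to the
coefficient of a tableau at the node `(v, s + k + x)`. -/
noncomputable def enteringRows (n k : ℕ) (j : ℕ → ℕ) (v : ℕ) (x : ℤ) : Finset ℕ :=
  {i ∈ Finset.Icc 1 k | Enters n v (j i) (x + i - 1)}

theorem mem_leavingRows :
    i ∈ leavingRows n k j v x ↔ i ∈ Icc 1 k ∧ Leaves n v (j i) (x + i) := by
  simp [leavingRows]

theorem mem_enteringRows :
    i ∈ enteringRows n k j v x ↔ i ∈ Icc 1 k ∧ Enters n v (j i) (x + i - 1) := by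
  simp [enteringRows]

theorem IsNode.tab_nodePos (h : IsNode ι n v t) (hn : 4 ≤ n) (hadm : Admissible n ι)
    (hj : IsColumn n k j) (s : ℤ) :
    tab (boxD ι n) s k j (nodePos ι n v t) =
      ((leavingRows n k j v (t - s - k)).card - (enteringRows n k j v (t - s - k)).card : ℤ) := by
  classical
  rw [tab, Finset.sum_apply, leavingRows, enteringRows, Int.cast_sub, Int.cast_natCast,
    Int.cast_natCast, ← Finset.sum_boole, ← Finset.sum_boole, ← Finset.sum_sub_distrib]
  refine Finset.sum_congr rfl fun i hi ↦ ?_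
  obtain ⟨hi, hik⟩ := Finset.mem_Icc.1 hi
  obtain ⟨he, hen⟩ := hj.entry_mem i hi hik
  rw [h.boxD_nodePos hn hadm he hen, show t - (s + k - i) = t - s - k + i by ring]

theorem exists_leaving_of_card_lt
    (h : (enteringRows n k j v x).card < (leavingRows n k j v x).card) :
    ∃ i ∈ leavingRows n k j v x, i + 1 ∉ enteringRows n k j v x := by
  by_contra! hall
  exact h.not_ge (Finset.card_le_card_of_injOn (· + 1) hall (add_left_injective 1).injOn)

theorem exists_entering_of_card_lt
    (h : (leavingRows n k j v x).card < (enteringRows n k j v x).card) :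
    ∃ i ∈ enteringRows n k j v x, ∀ a, a + 1 = i → a ∉ leavingRows n k j v x := by
  by_contra! hall
  choose! pred hpred using hall
  refine h.not_ge (Finset.card_le_card_of_injOn pred (fun i hi ↦ (hpred i hi).2) ?_)
  intro a ha b hb hab
  rw [← (hpred a ha).1, ← (hpred b hb).1, hab]

theorem IsColumn.exists_sub_beta (hj : IsColumn n k j) (hn : 4 ≤ n) (hadm : Admissible n ι)
    (hadap : Adapted n (cartanD n) ι) (h : IsNode ι n v t)
    (hpos : 0 < tab (boxD ι n) s k j (nodePos ι n v t)) :
    ∃ j', IsColumn n k j' ∧ tab (boxD ι n) s k j' =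
      tab (boxD ι n) s k j - beta (cartanD n) ι (nodePos ι n v t) := by
  rw [h.tab_nodePos hn hadm hj, Int.cast_pos, sub_pos, Nat.cast_lt] at hpos
  obtain ⟨i, hi, hi'⟩ := exists_leaving_of_card_lt hpos
  obtain ⟨hik, d, e', ha, hd⟩ := mem_leavingRows.1 hi
  obtain rfl : t = s + k - i + d := by omega
  refine ⟨Function.update j i e', ha.isColumn_update_target hj h.mem_Icc.1 hn hik ?_, ?_⟩
  · intro hlt hent
    refine hi' (mem_enteringRows.2 ⟨⟨by omega, hlt⟩, ?_⟩)
    convert hent using 1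
    push_cast
    ring
  · rw [tab_update _ _ _ _ hik, ha.boxD_sub_boxD hn hadm hadap h]

theorem IsColumn.exists_add_beta (hj : IsColumn n k j) (hn : 4 ≤ n) (hadm : Admissible n ι)
    (hadap : Adapted n (cartanD n) ι) (h : IsNode ι n v t)
    (hneg : tab (boxD ι n) s k j (nodePos ι n v (t + 1)) < 0) :
    ∃ j', IsColumn n k j' ∧ tab (boxD ι n) s k j' =
      tab (boxD ι n) s k j + beta (cartanD n) ι (nodePos ι n v t) := by
  rw [h.succ.tab_nodePos hn hadm hj, Int.cast_lt_zero, sub_neg, Nat.cast_lt] at hneg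
  obtain ⟨i, hi, hi'⟩ := exists_entering_of_card_lt hneg
  obtain ⟨hik, d, e, ha, hd⟩ := mem_enteringRows.1 hi
  obtain rfl : t = s + k - i + d := by omega
  refine ⟨Function.update j i e, ha.isColumn_update_source hj h.mem_Icc.1 hn hik ?_, ?_⟩
  · rintro a h1 rfl hlv
    refine hi' a rfl (mem_leavingRows.2 ⟨⟨h1, (Nat.le_succ a).trans hik.2⟩, ?_⟩)
    convert hlv using 1
    push_cast
    ring
  · rw [tab_update _ _ _ _ hik, ← ha.boxD_sub_boxD hn hadm hadap h, sub_sub_eq_add_sub,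
      add_sub_assoc]

end Columns

section Closure

theorem sub_nsmul_mem_of_sub_mem {M : Type*} [AddCommGroup M] {X : Set M} {b : M} (f : M →+ ℚ)
    (hb : f b = 1) (hX : ∀ φ ∈ X, 0 < f φ → φ - b ∈ X) {m : ℕ} {φ : M} (hφ : φ ∈ X)
    (hm : f φ = m) : φ - m • b ∈ X := by
  induction m generalizing φ with
  | zero => simpa using hφ
  | succ m ih =>
    have hpos : 0 < f φ := by rw [hm]; positivity
    rw [succ_nsmul', ← sub_sub]
    exact ih (hX φ hφ hpos) (by rw [map_sub, hb, hm, Nat.cast_succ, add_sub_cancel_right])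

variable {A : ℕ → ℕ → ℤ} {ι : ℕ → ℕ} {l : ℕ} {X : Set (ℕ → ℚ)} {φ : ℕ → ℚ}

theorem Sop_mem (hint : ∀ φ ∈ X, φ l ∈ range ((↑) : ℤ → ℚ)) (hl : beta A ι l l = 1)
    (hpos : ∀ φ ∈ X, 0 < φ l → φ - beta A ι l ∈ X)
    (hl' : kminus ι l ≠ 0 → beta A ι (kminus ι l) l = 1)
    (hneg : kminus ι l ≠ 0 → ∀ φ ∈ X, φ l < 0 → φ + beta A ι (kminus ι l) ∈ X) (hφ : φ ∈ X) :
    Sop A ι l φ ∈ X := by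
  obtain ⟨z, hz⟩ := hint φ hφ
  unfold Sop
  split_ifs with h
  · lift z to ℕ using by rw [← hz] at h; exact_mod_cast h.le
    rw [← hz, Int.cast_natCast, Nat.cast_smul_eq_nsmul]
    exact sub_nsmul_mem_of_sub_mem (Pi.evalAddMonoidHom _ l) hl hpos hφ hz.symm
  · rcases eq_or_ne (kminus ι l) 0 with h0 | h0
    · rwa [h0, beta_zero, smul_zero, sub_zero]
    obtain ⟨m, rfl⟩ : ∃ m : ℕ, z = -m := ⟨(-z).toNat, by
      rw [← hz, Int.cast_pos] at h
      omega⟩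
    rw [Int.cast_neg, Int.cast_natCast] at hz
    rw [← hz, neg_smul, ← smul_neg, Nat.cast_smul_eq_nsmul]
    refine sub_nsmul_mem_of_sub_mem (-Pi.evalAddMonoidHom _ l) ?_ (fun ψ hψ hψl ↦ ?_) hφ ?_
    · simpa using hl' h0
    · rw [sub_neg_eq_add]
      exact hneg h0 ψ hψ (by simpa using hψl)
    · simp [← hz]

theorem Sop_tab_mem {n k : ℕ} {s : ℤ} (hn : 4 ≤ n) (hadm : Admissible n ι)
    (hadap : Adapted n (cartanD n) ι) (hl : 1 ≤ l)
    (hφ : φ ∈ tab (boxD ι n) s k '' {j | IsColumn n k j}) :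
    Sop (cartanD n) ι l φ ∈ tab (boxD ι n) s k '' {j | IsColumn n k j} := by
  obtain ⟨v, t, h, rfl⟩ := hadm.exists_nodePos_eq hl
  have hpred (h0 : kminus ι (nodePos ι n v t) ≠ 0) : IsNode ι n v (t - 1) := by
    rw [h.kminus_nodePos hadm] at h0
    exact ⟨h.mem_Icc, not_lt.1 fun hlt ↦ h0 (nodePos_eq_zero hlt)⟩
  refine Sop_mem ?_ ?_ ?_ (fun h0 ↦ ?_) (fun h0 ↦ ?_) hφ
  · rintro _ ⟨j, hj, rfl⟩
    exact ⟨_, (h.tab_nodePos hn hadm hj s).symm⟩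
  · rw [beta_nodePos hn hadm hadap h h, if_pos rfl, if_pos (.inl rfl)]
  · rintro _ ⟨j, hj, rfl⟩ hpos
    exact IsColumn.exists_sub_beta hj hn hadm hadap h hpos
  · rw [h.kminus_nodePos hadm, beta_nodePos hn hadm hadap (hpred h0) h, if_pos rfl,
      if_pos (.inr (sub_add_cancel t 1).symm)]
  · rintro _ ⟨j, hj, rfl⟩ hneg
    rw [h.kminus_nodePos hadm]
    exact IsColumn.exists_add_beta hj hn hadm hadap (hpred h0) (by rwa [sub_add_cancel])

end Closure

section Descent

variable {ι : ℕ → ℕ} {n k v d e i : ℕ} {j j' : ℕ → ℕ} {s : ℤ}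

theorem IsNode.tab_nodePos_eq_zero {t : ℤ} (h : IsNode ι n v t) (hn : 4 ≤ n)
    (hadm : Admissible n ι) (hj : IsColumn n k j)
    (hsucc : ∀ r, r ∈ leavingRows n k j v (t - s - k) ↔
      r + 1 ∈ enteringRows n k j v (t - s - k)) :
    tab (boxD ι n) s k j (nodePos ι n v t) = 0 := by
  have himage : enteringRows n k j v (t - s - k) =
      (leavingRows n k j v (t - s - k)).image (· + 1) := by
    ext r
    simp only [Finset.mem_image, hsucc]
    refine ⟨fun hr ↦ ?_, fun ⟨_, ha, har⟩ ↦ har ▸ ha⟩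
    obtain ⟨a, rfl⟩ := Nat.exists_eq_add_of_le' (mem_enteringRows.1 hr).1.1
    exact ⟨a, hr, rfl⟩
  rw [h.tab_nodePos hn hadm hj, himage, Finset.card_image_of_injective _ (add_left_injective 1),
    sub_self, Int.cast_zero]

/-- The sum of the entries of the column, in which higher rows weigh more: the measure that
decreases in the descent from an arbitrary column to the column `1, …, k`. -/
def rowWeight (k : ℕ) (j : ℕ → ℕ) : ℕ := ∑ i ∈ Finset.Icc 1 k, (k + 1 - i) * j i

theorem rowWeight_update_add (hi : i ∈ Icc 1 k) (j : ℕ → ℕ) (e : ℕ) :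
    rowWeight k (Function.update j i e) + (k + 1 - i) * j i = rowWeight k j + (k + 1 - i) * e :=
  sum_apply_update_add (Finset.mem_Icc.2 hi) (fun i e ↦ (k + 1 - i) * e) j e

/-- One step of the descent: `j'` is a column of smaller weight such that the tableau of `j` is
equal to that of `j'` or is obtained from it by one operator `S_l`. -/
structure Descent (ι : ℕ → ℕ) (n k : ℕ) (s : ℤ) (j j' : ℕ → ℕ) : Prop where
  isColumn : IsColumn n k j'
  rowWeight_lt : rowWeight k j' < rowWeight k j
  tab_eq : tab (boxD ι n) s k j' = tab (boxD ι n) s k j ∨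
    ∃ v t, IsNode ι n v t ∧ tab (boxD ι n) s k j (nodePos ι n v t) = 0 ∧
      tab (boxD ι n) s k j' = tab (boxD ι n) s k j + beta (cartanD n) ι (nodePos ι n v t)

theorem Arrow.descent_update (ha : Arrow n v d e (j i)) (hj : IsColumn n k j) (hn : 4 ≤ n)
    (hadm : Admissible n ι) (hadap : Adapted n (cartanD n) ι) (hi : i ∈ Icc 1 k)
    (h : IsNode ι n v (s + k - i + d)) (hpred : ∀ a, 1 ≤ a → a + 1 = i → ¬ Leaves n v (j a) d)
    (hsucc : ∀ r, r ∈ leavingRows n k j v (d - i) ↔ r + 1 ∈ enteringRows n k j v (d - i)) :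
    Descent ι n k s j (Function.update j i e) where
  isColumn := ha.isColumn_update_source hj h.mem_Icc.1 hn hi hpred
  rowWeight_lt := by
    have hw := rowWeight_update_add hi j e
    have hlt : (k + 1 - i) * e < (k + 1 - i) * j i := by
      have := hi.2
      refine Nat.mul_lt_mul_of_pos_left ?_ (by omega)
      unfold Arrow at ha
      omega
    omega
  tab_eq := by
    refine .inr ⟨v, _, h, h.tab_nodePos_eq_zero hn hadm hj ?_, ?_⟩
    · rwa [show (s + k - i + d - s - k : ℤ) = d - i by ring]
    · rw [tab_update _ _ _ _ hi, ← ha.boxD_sub_boxD hn hadm hadap h, sub_sub_eq_add_sub,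
        add_sub_assoc]

/-- Row `i` is the first row of the column whose entry is not its index. -/
structure IsFirstNe (k : ℕ) (j : ℕ → ℕ) (i : ℕ) : Prop where
  mem_Icc : i ∈ Icc 1 k
  lt_apply : i < j i
  apply_eq : ∀ a, 1 ≤ a → a < i → j a = a

theorem IsColumn.exists_isFirstNe (hj : IsColumn n k j) (hkn : k + 2 ≤ n)
    (hne : ∃ i ∈ Icc 1 k, j i ≠ i) :
    ∃ i, IsFirstNe k j i := by
  classical
  have hi := Nat.find_spec hne
  have hmin {a : ℕ} (ha : 1 ≤ a) (hlt : a < Nat.find hne) : j a = a := by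
    by_contra hja
    exact Nat.find_min hne hlt ⟨⟨ha, hlt.le.trans hi.1.2⟩, hja⟩
  generalize Nat.find hne = i at hi hmin
  obtain ⟨⟨h1, hik⟩, hji⟩ := hi
  refine ⟨i, ⟨h1, hik⟩, ?_, fun a ↦ hmin⟩
  rcases h1.eq_or_lt with rfl | h1
  · have := hj.entry_mem 1 le_rfl hik
    omega
  · obtain ⟨a, rfl⟩ := Nat.exists_eq_add_of_le' h1.le
    have hle := hj.not_leD_succ a (by omega) hik
    rw [not_leD_iff, hmin (by omega) a.lt_succ_self] at hle
    omega

theorem isNode_of_le {t : ℤ} (hn : 4 ≤ n) (hk : 1 ≤ k) (hkn : k + 2 ≤ n) (hs : IsNode ι n k s)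
    (hv : v ∈ Icc 1 n) (ht : s + (k - v : ℕ) ≤ t) : IsNode ι n v t := by
  have hP := PD_le_PD_add (ι := ι) hn hk hkn hv.1 hv.2
  have := hs.one_le
  exact ⟨hv, by omega⟩

/-- `a → e` and `f → g` are the two arrows of colour `v`, in the order of the crystal; their
offsets are `0` and `d`. -/
structure ArrowPair (n v d a e f g : ℕ) : Prop where
  lower : Arrow n v 0 a e
  upper : Arrow n v d f g
  lt : e < g

variable {a f g y : ℕ} {x : ℤ}

theorem ArrowPair.cases (hp : ArrowPair n v d a e f g) :
    v < n ∧ d + v + 1 = n ∧ a = v ∧ e = v + 1 ∧ f + v = 2 * n ∧ g + v = 2 * n + 1 ∨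
      v = n ∧ d = 0 ∧ a + 1 = n ∧ e = n + 1 ∧ f = n ∧ g = n + 2 := by
  obtain ⟨hl, hu, hlt⟩ := hp
  unfold Arrow at hl hu
  omega

theorem ArrowPair.leaves_iff (hp : ArrowPair n v d a e f g) :
    Leaves n v y x ↔ x = 0 ∧ y = a ∨ x = d ∧ y = f := by
  have := hp.cases
  rw [_root_.leaves_iff]
  omega

theorem ArrowPair.enters_iff (hp : ArrowPair n v d a e f g) :
    Enters n v y x ↔ x = 0 ∧ y = e ∨ x = d ∧ y = g := by
  have := hp.cases
  rw [_root_.enters_iff]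
  omega

theorem exists_arrowPair_lower (hn : 4 ≤ n) (he : 2 ≤ e) (hen : e ≤ n + 1) :
    ∃ v ∈ Icc 1 n, ∃ d a f g, ArrowPair n v d a e f g := by
  rcases lt_or_ge n e with h | h
  · refine ⟨n, ⟨by omega, le_rfl⟩, 0, n - 1, n, n + 2, ?_, ?_, by omega⟩ <;> unfold Arrow <;> omega
  · refine ⟨e - 1, ⟨by omega, by omega⟩, n - e, e - 1, 2 * n + 1 - e, 2 * n + 2 - e, ?_, ?_,
      by omega⟩ <;> unfold Arrow <;> omega

theorem exists_arrowPair_upper (hg : n + 2 ≤ g) (hgn : g ≤ 2 * n) :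
    ∃ v ∈ Icc 1 n, ∃ d a e f, v < n ∧ ArrowPair n v d a e f g := by
  refine ⟨2 * n + 1 - g, ⟨by omega, by omega⟩, g - n - 2, 2 * n + 1 - g, 2 * n + 2 - g, g - 1,
    by omega, ?_, ?_, by omega⟩ <;> unfold Arrow <;> omega

theorem IsFirstNe.exists_descent_of_barred (hi : IsFirstNe k j i) (hj : IsColumn n k j)
    (hn : 4 ≤ n) (hadm : Admissible n ι) (hadap : Adapted n (cartanD n) ι) (hkn : k + 2 ≤ n)
    (hs : IsNode ι n k s) (hji : n + 2 ≤ j i) : ∃ j', Descent ι n k s j j' := by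
  obtain ⟨⟨h1, hik⟩, hlt, hfirst⟩ := hi
  obtain ⟨v, hv, d, a, e, f, hvn, hp⟩ :=
    exists_arrowPair_upper hji (hj.entry_mem i h1 hik).2
  have hc := hp.cases
  have hstep := hj.not_leD_succ i h1
  rw [not_leD_iff] at hstep
  refine ⟨_, hp.upper.descent_update hj hn hadm hadap ⟨h1, hik⟩
    (isNode_of_le hn (h1.trans hik) hkn hs hv (by omega)) (fun b hb hbi ↦ ?_) fun r ↦ ?_⟩
  · have := hfirst b hb (by omega)
    rw [hp.leaves_iff]
    omega
  · simp only [mem_leavingRows, mem_enteringRows, hp.leaves_iff, hp.enters_iff, Set.mem_Icc]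
    have := hfirst r
    have := hfirst (r + 1)
    have : r = i → j r = j i := congrArg j
    have : r = i → j (r + 1) = j (i + 1) := fun h ↦ h ▸ rfl
    have : r + 1 = i → j (r + 1) = j i := congrArg j
    omega

theorem IsFirstNe.descent_lower (hi : IsFirstNe k j i) (hj : IsColumn n k j) (hn : 4 ≤ n)
    (hadm : Admissible n ι) (hadap : Adapted n (cartanD n) ι) (hkn : k + 2 ≤ n)
    (hs : IsNode ι n k s) (hv : v ∈ Icc 1 n) (hp : ArrowPair n v d a (j i) f g)
    (hfg : i + d ≤ k ∧ j (i + d) = f ↔ i + d < k ∧ j (i + d + 1) = g) :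
    Descent ι n k s j (Function.update j i a) := by
  obtain ⟨⟨h1, hik⟩, hlt, hfirst⟩ := hi
  have hc := hp.cases
  have hstep := hj.not_leD_succ i h1
  rw [not_leD_iff] at hstep
  refine hp.lower.descent_update hj hn hadm hadap ⟨h1, hik⟩
    (isNode_of_le hn (h1.trans hik) hkn hs hv (by omega)) (fun b hb hbi ↦ ?_) fun r ↦ ?_
  · have := hfirst b hb (by omega)
    rw [hp.leaves_iff]
    omega
  · simp only [mem_leavingRows, mem_enteringRows, hp.leaves_iff, hp.enters_iff, Set.mem_Icc]
    rcases eq_or_ne r (i + d) with rfl | hrd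
    · have : d = 0 → j (i + d) = j i := fun h ↦ h ▸ rfl
      have : d = 0 → j (i + d + 1) = j (i + 1) := fun h ↦ h ▸ rfl
      omega
    · have : r = i → j r = j i := congrArg j
      have : r = i → j (r + 1) = j (i + 1) := fun h ↦ h ▸ rfl
      omega

theorem IsFirstNe.descent_upper (hi : IsFirstNe k j i) (hj : IsColumn n k j) (hn : 4 ≤ n)
    (hadm : Admissible n ι) (hadap : Adapted n (cartanD n) ι) (hkn : k + 2 ≤ n)
    (hs : IsNode ι n k s) (hv : v ∈ Icc 1 n) (hp : ArrowPair n v d a (j i) f (j (i + d + 1)))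
    (hf : j (i + d) ≠ f) (hik : i + d < k) :
    Descent ι n k s j (Function.update j (i + d + 1) f) := by
  have h1 := hi.mem_Icc.1
  have hlt := hi.lt_apply
  have hc := hp.cases
  refine hp.upper.descent_update hj hn hadm hadap ⟨by omega, hik⟩
    (isNode_of_le hn (by omega) hkn hs hv (by omega)) (fun b hb hbi ↦ ?_) fun r ↦ ?_
  · obtain rfl : b = i + d := by omega
    have : d = 0 → j (i + d) = j i := fun h ↦ h ▸ rfl
    rw [hp.leaves_iff]
    omega
  · have h₁ := hj.not_leD_succ i h1
    have h₂ := hj.not_leD_succ (i + 1) (by omega)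
    have h₃ := hj.not_leD_succ (i + d + 1) (by omega)
    have : d = 0 → j (i + d + 1) = j (i + 1) := fun h ↦ h ▸ rfl
    simp only [mem_leavingRows, mem_enteringRows, hp.leaves_iff, hp.enters_iff, Set.mem_Icc,
      not_leD_iff] at *
    rcases eq_or_ne r (i + d + 1) with rfl | hrd
    · omega
    · have : r = i + 1 → j r = j (i + 1) := congrArg j
      have : r = i + 1 → j (r + 1) = j (i + 1 + 1) := fun h ↦ h ▸ rfl
      omega

theorem rowWeight_exchange_lt (hi : 1 ≤ i) (hid : i + d ≤ k) (hd : d ≠ 0) (hji : j i = a + 1) :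
    rowWeight k (Function.update (Function.update j (i + d) (j (i + d) + 1)) i a) <
      rowWeight k j := by
  have hrow : Function.update j (i + d) (j (i + d) + 1) i = a + 1 :=
    (Function.update_of_ne (by omega) _ _).trans hji
  have hwi := rowWeight_update_add (k := k) ⟨hi, by omega⟩
    (Function.update j (i + d) (j (i + d) + 1)) a
  have hwd := rowWeight_update_add (k := k) ⟨by omega, hid⟩ j (j (i + d) + 1)
  obtain ⟨c, hc⟩ := Nat.exists_eq_add_of_le hid
  rw [hrow, show k + 1 - i = c + 1 + d by omega, Nat.mul_succ] at hwi
  rw [show k + 1 - (i + d) = c + 1 by omega, Nat.mul_succ] at hwd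
  omega

theorem IsFirstNe.descent_exchange (hi : IsFirstNe k j i) (hj : IsColumn n k j) (hn : 4 ≤ n)
    (hadm : Admissible n ι) (hadap : Adapted n (cartanD n) ι) (hkn : k + 2 ≤ n)
    (hs : IsNode ι n k s) (hv : v ∈ Icc 1 n) (hp : ArrowPair n v d a (j i) (j (i + d)) g)
    (hg : i + d < k → j (i + d + 1) ≠ g) (hik : i + d ≤ k) :
    Descent ι n k s j (Function.update (Function.update j (i + d) g) i a) := by
  obtain ⟨⟨h1, -⟩, hlt, hfirst⟩ := hi
  have hc := hp.cases
  have hd : d ≠ 0 := by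
    rintro rfl
    rw [add_zero] at hc
    omega
  have hnode : IsNode ι n v (s + k - i) := isNode_of_le hn (by omega) hkn hs hv (by omega)
  have hrow : Function.update j (i + d) g i = j i := Function.update_of_ne (by omega) _ _
  have hlow := hp.lower
  rw [← hrow] at hlow
  refine ⟨hlow.isColumn_update_source (hp.upper.isColumn_update_target hj hv.1 hn ⟨by omega, hik⟩
    fun hlt hent ↦ ?_) hv.1 hn ⟨h1, by omega⟩ fun b hb hbi ↦ ?_, ?_, .inl ?_⟩
  · rw [hp.enters_iff] at hent
    have := hg hlt
    omega
  · have := hfirst b hb (by omega)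
    rw [Function.update_of_ne (by omega), hp.leaves_iff]
    omega
  · obtain rfl : g = j (i + d) + 1 := by omega
    exact rowWeight_exchange_lt h1 hik hd (by omega)
  · have hlower := hp.lower.boxD_sub_boxD (l := s + k - i) hn hadm hadap (by simpa using hnode)
    have hupper := hp.upper.boxD_sub_boxD (l := s + k - (i + d : ℕ)) hn hadm hadap
      (by rwa [Nat.cast_add, ← sub_sub, sub_add_cancel])
    rw [Nat.cast_zero, add_zero] at hlower
    rw [Nat.cast_add, ← sub_sub, sub_add_cancel] at hupper
    rw [tab_update _ _ _ _ ⟨h1, by omega⟩, tab_update _ _ _ _ ⟨by omega, hik⟩, hrow, Nat.cast_add,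
      ← sub_sub (s + k : ℤ), hupper, ← hlower]
    abel

theorem IsColumn.exists_descent (hj : IsColumn n k j) (hn : 4 ≤ n) (hadm : Admissible n ι)
    (hadap : Adapted n (cartanD n) ι) (hkn : k + 2 ≤ n) (hs : IsNode ι n k s)
    (hne : ∃ i ∈ Icc 1 k, j i ≠ i) : ∃ j', Descent ι n k s j j' := by
  obtain ⟨i, hi⟩ := hj.exists_isFirstNe hkn hne
  rcases le_or_gt (n + 2) (j i) with hji | hji
  · exact hi.exists_descent_of_barred hj hn hadm hadap hkn hs hji
  obtain ⟨v, hv, d, a, f, g, hp⟩ := exists_arrowPair_lower hn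
    (hi.mem_Icc.1.trans_lt hi.lt_apply) (Nat.lt_succ_iff.1 hji)
  by_cases hf : i + d ≤ k ∧ j (i + d) = f <;> by_cases hg : i + d < k ∧ j (i + d + 1) = g
  · exact ⟨_, hi.descent_lower hj hn hadm hadap hkn hs hv hp (iff_of_true hf hg)⟩
  · obtain ⟨hik, rfl⟩ := hf
    exact ⟨_, hi.descent_exchange hj hn hadm hadap hkn hs hv hp (not_and.1 hg) hik⟩
  · obtain ⟨hik, rfl⟩ := hg
    exact ⟨_, hi.descent_upper hj hn hadm hadap hkn hs hv hp (not_and.1 hf hik.le) hik⟩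
  · exact ⟨_, hi.descent_lower hj hn hadm hadap hkn hs hv hp (iff_of_false hf hg)⟩

end Descent

section Reachability

variable {A : ℕ → ℕ → ℤ} {ι : ℕ → ℕ} {n k l : ℕ} {j : ℕ → ℕ} {s : ℤ} {X : Set (ℕ → ℚ)}
  {φ : ℕ → ℚ}

theorem IsNode.xsj_eq_xc (h : IsNode ι n k s) :
    xsj ι n (s + PD ι n k) k = xc (nodePos ι n k s) :=
  if_pos ⟨h.one_le, h.mem_Icc⟩

theorem IsNode.tab_eq_xc (h : IsNode ι n k s) (hkn : k + 2 ≤ n) (hj : ∀ i ∈ Icc 1 k, j i = i) :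
    tab (boxD ι n) s k j = xc (nodePos ι n k s) := by
  have hbox (i : ℕ) (hi : i ∈ Finset.range k) : boxD ι n (s + k - (i + 1 : ℕ)) (j (i + 1)) =
      xsj ι n (s + k - (i + 1 : ℕ) + PD ι n (i + 1)) (i + 1) -
        xsj ι n (s + k - i + PD ι n i) i := by
    have hik := Finset.mem_range.1 hi
    rw [hj _ ⟨by omega, hik⟩, boxD, if_neg i.succ_ne_zero, if_pos (by omega), Nat.succ_sub_one]
    congr 2
    push_cast
    ring
  have h0 (z : ℤ) : xsj ι n z 0 = 0 := if_neg (by omega)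
  calc tab (boxD ι n) s k j
      = ∑ i ∈ Finset.range k, boxD ι n (s + k - (i + 1 : ℕ)) (j (i + 1)) := by
        rw [Finset.range_eq_Ico,
          Finset.sum_Ico_add' (fun i : ℕ ↦ boxD ι n (s + k - i) (j i)) 0 k 1]
        rfl
    _ = xsj ι n (s + k - k + PD ι n k) k - xsj ι n (s + k - (0 : ℕ) + PD ι n 0) 0 := by
        rw [Finset.sum_congr rfl hbox,
          Finset.sum_range_sub fun i : ℕ ↦ xsj ι n (s + k - i + PD ι n i) i]
    _ = xc (nodePos ι n k s) := by rw [h0, sub_zero, add_sub_cancel_right, h.xsj_eq_xc]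

theorem XiMemFrom.of_add_beta (h : XiMemFrom A ι X (φ + beta A ι l)) (hl : 1 ≤ l)
    (hβ : beta A ι l l = 1) (hφ : φ l = 0) : XiMemFrom A ι X φ := by
  have hstep := h.step l hl
  rwa [Sop, if_pos (by simp [hβ, hφ]), Pi.add_apply, hβ, hφ, zero_add, one_smul,
    add_sub_cancel_right] at hstep

theorem IsColumn.xiMemFrom (hj : IsColumn n k j) (hn : 4 ≤ n) (hadm : Admissible n ι)
    (hadap : Adapted n (cartanD n) ι) (hkn : k + 2 ≤ n) (hs : IsNode ι n k s)
    (hX : xc (nodePos ι n k s) ∈ X) : XiMemFrom (cartanD n) ι X (tab (boxD ι n) s k j) := by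
  induction hw : rowWeight k j using Nat.strong_induction_on generalizing j with
  | _ w ih =>
  by_cases hne : ∃ i ∈ Icc 1 k, j i ≠ i
  · obtain ⟨j', hj', hlt, hT | ⟨v, t, h, h0, hT⟩⟩ := hj.exists_descent hn hadm hadap hkn hs hne
    · exact hT ▸ ih _ (hw ▸ hlt) hj' rfl
    · refine .of_add_beta (hT ▸ ih _ (hw ▸ hlt) hj' rfl) (h.one_le_nodePos hadm) ?_ h0
      rw [beta_nodePos hn hadm hadap h h, if_pos rfl, if_pos (.inl rfl)]
  · push Not at hne
    exact .base _ (hs.tab_eq_xc hkn hne ▸ hX)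

theorem isColumn_id (hkn : k + 2 ≤ n) : IsColumn n k id :=
  ⟨fun i h1 hik ↦ ⟨h1, show i ≤ 2 * n by omega⟩,
    fun i _ _ ↦ not_leD_iff.2 (.inl i.lt_succ_self)⟩

end Reachability

/-- Lemma 5.9: in type D, for `k ∈ [1,n-2]`, the forms obtained from the `x_{r,k}`
(`r ≥ 1`) by the operators `S_l` are exactly the tableaux of `Tab_{D,ι}` with `k` rows
whose first entry is not `ovl(n+1)` (all entries encoded in `[1,2n]`). -/
theorem xi_from_xrk_D (n : ℕ) (hn : 4 ≤ n) (ι : ℕ → ℕ)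
    (hadm : Admissible n ι) (hadap : Adapted n (cartanD n) ι) :
    ∀ k, 1 ≤ k → k ≤ n - 2 →
      { φ : ℕ → ℚ |
          XiMemFrom (cartanD n) ι { ψ | ∃ r, 1 ≤ r ∧ ψ = xc (occPos ι k r) } φ } =
      { T : ℕ → ℚ | ∃ (s : ℤ) (j : ℕ → ℕ),
          (∀ i, 1 ≤ i → i ≤ k → 1 ≤ j i ∧ j i ≤ 2 * n) ∧
          (∀ i, 1 ≤ i → i < k → ¬ leD n (j (i + 1)) (j i)) ∧
          1 - (PD ι n k : ℤ) ≤ s ∧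
          T = tab (boxD ι n) s k j } := by
  intro k hk hkn
  have hk2 : k + 2 ≤ n := by omega
  have hkI : k ∈ Icc 1 n := ⟨hk, by omega⟩
  ext φ
  constructor
  · intro hφ
    obtain ⟨s, hs, hmem⟩ :
        ∃ s, IsNode ι n k s ∧ φ ∈ tab (boxD ι n) s k '' {j | IsColumn n k j} := by
      induction hφ with
      | base φ hφ =>
        obtain ⟨r, hr, rfl⟩ := hφ
        have hs : IsNode ι n k (r - PD ι n k) := ⟨hkI, by omega⟩
        refine ⟨_, hs, id, isColumn_id hk2, (hs.tab_eq_xc hk2 fun _ _ ↦ rfl).trans ?_⟩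
        rw [nodePos, sub_add_cancel, Int.toNat_natCast]
      | step l hl φ _ ih => exact ih.imp fun s ⟨hs, h⟩ ↦ ⟨hs, Sop_tab_mem hn hadm hadap hl h⟩
    obtain ⟨j, hj, rfl⟩ := hmem
    exact ⟨s, j, hj.entry_mem, hj.not_leD_succ, by linarith [hs.one_le], rfl⟩
  · rintro ⟨s, j, hmem, hle, hs, rfl⟩
    have hnode : IsNode ι n k s := ⟨hkI, by omega⟩
    exact IsColumn.xiMemFrom ⟨hmem, hle⟩ hn hadm hadap hk2 hnode ⟨_, hnode.one_le_toNat, rfl⟩
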